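/- arXiv:1910.11025 — 2 statements merged into one kernel-verified Lean document; each statement's English description precedes it below -/
import Mathlib

section
/- Let X be a set such that [X]^{<ω} is D-infinite, i.e., there exists an injective function ℕ → [X]^{<ω}. Then X is H^D-infinite: for every colouring c : [X]^{<ω} → {0,1} there exists an infinite family Y ⊆ [X]^{<ω} of pairwise disjoint nonempty finite sets such that FU(Y) is monochromatic for c. -/
/-!
Since `Finset X` is infinite, so is `X`; fix distinct points `g 0, g 1, ...` of `X`.

The finite unions theorem is deduced from Hindman's theorem for semigroups, applied to the
semigroup `PartialUnion X` of finite subsets of `X` together with an absorbing element `undef`: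
the product of two finite sets is their union when they are disjoint, and `undef` otherwise.
All finite products of the sequence `{g 0}, {g 1}, ...` are nonempty finite sets, so they are
covered by the two colour classes of nonempty finite sets. Hindman's theorem
(`Hindman.FP_partition_regular`) yields a sequence `b` whose finite products all lie in one class.
In particular no finite product of `b` is `undef`, which forces the terms of `b` to be pairwise
disjoint nonempty sets, and then the finite products are exactly the finite unions.
-/

instance {X : Type*} [DecidableEq X] :
    Std.Commutative (fun a b : Finset X => symmDiff a b) :=
  ⟨fun a b => symmDiff_comm a b⟩

instance {X : Type*} [DecidableEq X] :
    Std.Associative (fun a b : Finset X => symmDiff a b) :=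
  ⟨fun a b c => symmDiff_assoc a b c⟩

/-- The symmetric difference of all the members of a finite family of finite sets. -/
def FSfold {X : Type*} [DecidableEq X] (F : Finset (Finset X)) : Finset X :=
  F.fold (fun a b => symmDiff a b) ∅ id

/-- `FS Y`: symmetric differences of finitely many (at least one) distinct elements of `Y`. -/
def FS {X : Type*} [DecidableEq X] (Y : Set (Finset X)) : Set (Finset X) :=
  { z | ∃ F : Finset (Finset X), ↑F ⊆ Y ∧ F.Nonempty ∧ z = FSfold F }

/-- `FSle n Y`: symmetric differences of between `1` and `n` distinct elements of `Y`. -/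
def FSle {X : Type*} [DecidableEq X] (n : ℕ) (Y : Set (Finset X)) : Set (Finset X) :=
  { z | ∃ F : Finset (Finset X), ↑F ⊆ Y ∧ 0 < F.card ∧ F.card ≤ n ∧ z = FSfold F }

/-- `FU Y`: unions of finitely many (at least one) distinct elements of `Y`. -/
def FU {X : Type*} [DecidableEq X] (Y : Set (Finset X)) : Set (Finset X) :=
  { z | ∃ F : Finset (Finset X), ↑F ⊆ Y ∧ F.Nonempty ∧ z = F.sup id }

/-- `FUle n Y`: unions of between `1` and `n` distinct elements of `Y`. -/
def FUle {X : Type*} [DecidableEq X] (n : ℕ) (Y : Set (Finset X)) : Set (Finset X) :=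
  { z | ∃ F : Finset (Finset X), ↑F ⊆ Y ∧ 0 < F.card ∧ F.card ≤ n ∧ z = F.sup id }

/-- A family of finite sets is pairwise disjoint. -/
def PairwiseDisj {X : Type*} (Y : Set (Finset X)) : Prop :=
  ∀ a ∈ Y, ∀ b ∈ Y, a ≠ b → Disjoint a b

/-- A set of finite sets is monochromatic for the colouring `c`. -/
def Mono {X : Type*} (c : Finset X → Bool) (S : Set (Finset X)) : Prop :=
  ∃ i : Bool, ∀ z ∈ S, c z = i

/-- `X` is `H^D`-finite: some colouring of `[X]^{<ω}` admits no infinite pairwise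
disjoint `Y` with `FU(Y)` monochromatic. -/
def HDFinite (X : Type*) [DecidableEq X] : Prop :=
  ∃ c : Finset X → Bool, ∀ Y : Set (Finset X), Y.Infinite → PairwiseDisj Y →
    ¬ Mono c (FU Y)

/-- `X` is `H^D_n`-finite: some colouring of `[X]^{<ω}` admits no infinite pairwise
disjoint `Y` with `FU_{≤n}(Y)` monochromatic. -/
def HDnFinite (X : Type*) [DecidableEq X] (n : ℕ) : Prop :=
  ∃ c : Finset X → Bool, ∀ Y : Set (Finset X), Y.Infinite → PairwiseDisj Y →
    ¬ Mono c (FUle n Y)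

/-- `X` is `H^B`-finite: some colouring of `[X]^{<ω}` admits no infinite
`Y` with `FS(Y)` monochromatic. -/
def HBFinite (X : Type*) [DecidableEq X] : Prop :=
  ∃ c : Finset X → Bool, ∀ Y : Set (Finset X), Y.Infinite → ¬ Mono c (FS Y)

/-- `X` is `H^B_n`-finite: some colouring of `[X]^{<ω}` admits no infinite
`Y` with `FS_{≤n}(Y)` monochromatic. -/
def HBnFinite (X : Type*) [DecidableEq X] (n : ℕ) : Prop :=
  ∃ c : Finset X → Bool, ∀ Y : Set (Finset X), Y.Infinite → ¬ Mono c (FSle n Y)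

/-- Finite subsets of `X` under disjoint union, made into a total operation by adjoining an
absorbing element `undef`, which is the value for non-disjoint arguments. -/
inductive PartialUnion (X : Type*) where
  | of (a : Finset X)
  | undef

namespace PartialUnion

variable {X : Type*} [DecidableEq X]

/-- Union of disjoint sets; `undef` as soon as the arguments meet or one of them is `undef`. -/
def mul : PartialUnion X → PartialUnion X → PartialUnion X
  | of a, of b => if Disjoint a b then of (a ∪ b) else undef
  | _, _ => undef

instance : CommMonoid (PartialUnion X) where
  mul := mul
  one := of ∅
  mul_assoc a b c := by
    change mul (mul a b) c = mul a (mul b c)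
    rcases a with a | _ <;> rcases b with b | _ <;> rcases c with c | _ <;>
      simp only [mul] <;> (try split_ifs) <;> simp_all [Finset.union_assoc]
  mul_comm a b := by
    change mul a b = mul b a
    rcases a with a | _ <;> rcases b with b | _ <;> simp only [mul]
    rw [Finset.union_comm]
    simp only [disjoint_comm]
  one_mul a := by
    change mul (of ∅) a = a
    rcases a with a | _ <;> simp [mul]
  mul_one a := by
    change mul a (of ∅) = a
    rcases a with a | _ <;> simp [mul]

theorem of_mul_of {a b : Finset X} (h : Disjoint a b) : of a * of b = of (a ∪ b) :=
  if_pos h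

theorem disjoint_of_mul_eq {a b z : Finset X} (h : of a * of b = of z) : Disjoint a b := by
  by_contra hd
  cases (if_neg hd).symm.trans h

theorem prod_of {ι : Type*} [DecidableEq ι] (y : ι → Finset X)
    (hy : ∀ i j, i ≠ j → Disjoint (y i) (y j)) (s : Finset ι) :
    ∏ i ∈ s, of (y i) = of (s.sup y) := by
  induction s using Finset.induction_on with
  | empty => rfl
  | insert i s hi ih =>
    have hd : Disjoint (y i) (s.sup y) :=
      Finset.disjoint_sup_right.2 fun j hj => hy i j fun hij => hi (hij ▸ hj)
    rw [Finset.prod_insert hi, ih, of_mul_of hd, Finset.sup_insert, Finset.sup_eq_union]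

/-- Every finite product of a tail of the sequence of singletons `{g 0}, {g 1}, ...` is a nonempty
set. The bound on the indices of its points is what makes the induction go through. -/
theorem exists_of_mem_FP {g : ℕ → X} (hg : Function.Injective g) {a : Stream' (PartialUnion X)}
    {m : PartialUnion X} (hm : m ∈ Hindman.FP a) :
    ∀ n, (∀ k, a.get k = of {g (n + k)}) →
      ∃ z : Finset X, m = of z ∧ z.Nonempty ∧ ∀ x ∈ z, ∃ k, n ≤ k ∧ x = g k := by
  induction hm with
  | head' a =>
    intro n ha
    exact ⟨{g n}, ha 0, Finset.singleton_nonempty _, fun x hx => ⟨n, le_rfl, by simpa using hx⟩⟩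
  | tail' a m _ ih =>
    intro n ha
    obtain ⟨z, hz, hne, hk⟩ := ih (n + 1) fun k => by
      rw [Stream'.get_tail, ha, add_assoc, add_comm 1 k]
    exact ⟨z, hz, hne, fun x hx => let ⟨k, h, e⟩ := hk x hx; ⟨k, by omega, e⟩⟩
  | cons' a m _ ih =>
    intro n ha
    obtain ⟨z, rfl, hne, hk⟩ := ih (n + 1) fun k => by
      rw [Stream'.get_tail, ha, add_assoc, add_comm 1 k]
    have hd : Disjoint {g n} z := by
      rw [Finset.disjoint_singleton_left]
      intro hx
      obtain ⟨k, h, e⟩ := hk _ hx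
      have := hg e
      omega
    refine ⟨{g n} ∪ z, ?_, by simp, ?_⟩
    · rw [← of_mul_of hd]
      exact congrArg (· * of z) (ha 0)
    · intro x hx
      rcases Finset.mem_union.1 hx with hx | hx
      · exact ⟨n, le_rfl, by simpa using hx⟩
      · obtain ⟨k, h, e⟩ := hk x hx
        exact ⟨k, by omega, e⟩

end PartialUnion

/-- If there is an injection `ℕ → [X]^{<ω}`, then `X` is `H^D`-infinite: for every
colouring of `[X]^{<ω}` there is an infinite pairwise disjoint family `Y` of nonempty
finite subsets of `X` with `FU(Y)` monochromatic. -/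
theorem stmt12 {X : Type*} [DecidableEq X]
    (h : ∃ f : ℕ → Finset X, Function.Injective f) (c : Finset X → Bool) :
    ∃ Y : Set (Finset X), Y.Infinite ∧ (∀ y ∈ Y, y.Nonempty) ∧ PairwiseDisj Y ∧
      Mono c (FU Y) := by
  obtain ⟨f, hf⟩ := h
  have hX : Infinite X := by
    by_contra hfin
    have : Finite X := not_infinite_iff_finite.1 hfin
    have : Infinite (Finset X) := Infinite.of_injective f hf
    exact not_finite (Finset X)
  let g : ℕ ↪ X := Infinite.natEmbedding X
  -- The nonempty finite sets of colour `i`.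
  let C : Bool → Set (PartialUnion X) := fun i =>
    {m | ∃ z : Finset X, m = PartialUnion.of z ∧ z.Nonempty ∧ c z = i}
  have hcov : Hindman.FP (fun n => PartialUnion.of {g n} : Stream' (PartialUnion X)) ⊆
      ⋃₀ Set.range C := by
    intro m hm
    obtain ⟨z, hz, hne, -⟩ := PartialUnion.exists_of_mem_FP g.injective hm 0
      fun k => by rw [zero_add]; rfl
    exact ⟨C (c z), ⟨c z, rfl⟩, z, hz, hne, rfl⟩
  obtain ⟨_, ⟨i, rfl⟩, b, hb⟩ :=
    Hindman.FP_partition_regular _ (Set.range C) (Set.finite_range C) hcov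
  choose y hby hne _ using fun n => hb (Hindman.FP.singleton b n)
  have hlt : ∀ j k, j < k → Disjoint (y j) (y k) := by
    intro j k hjk
    obtain ⟨z, hz, -⟩ := hb (Hindman.FP.mul_two b j k hjk)
    rw [hby, hby] at hz
    exact PartialUnion.disjoint_of_mul_eq hz
  have hdisj : ∀ j k, j ≠ k → Disjoint (y j) (y k) := fun j k hjk =>
    hjk.lt_or_gt.elim (hlt j k) fun hkj => (hlt k j hkj).symm
  have hinj : Function.Injective y := by
    intro j k hjk
    by_contra hne'
    have hd := hdisj j k hne'
    rw [hjk, disjoint_self] at hd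
    exact (hne k).ne_empty hd
  refine ⟨Set.range y, Set.infinite_range_of_injective hinj, ?_, ?_, i, ?_⟩
  · rintro _ ⟨n, rfl⟩
    exact hne n
  · rintro _ ⟨j, rfl⟩ _ ⟨k, rfl⟩ hjk
    exact hdisj j k fun h => hjk (congrArg y h)
  · rintro _ ⟨F, hF, hFne, rfl⟩
    rw [← Set.image_univ] at hF
    obtain ⟨s, -, rfl⟩ := Finset.subset_set_image_iff.1 hF
    obtain ⟨z, hz, -, hc⟩ := hb (Hindman.FP.finsetProd b s (Finset.image_nonempty.1 hFne))
    simp only [hby] at hz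
    rw [PartialUnion.prod_of y hdisj] at hz
    rw [Finset.sup_image, Function.id_comp, PartialUnion.of.inj hz]
    exact hc
end

section
/- Every H_2-finite set is R^2-finite. Equivalently (contrapositively): if X is R^2-infinite, then for every colouring c : [X]^{<ω} → {0,1} there exists an infinite Y ⊆ [X]^{<ω} such that FS_{≤2}(Y) is monochromatic for c. -/
/-- A set (type) `X` is `R^n`-finite if there exists a 2-colouring of the
`n`-element subsets of `X` such that for every infinite subset `Y ⊆ X`,
the restriction of the colouring to the `n`-element subsets of `Y` is not constant. -/
def RFinite (X : Type*) (n : ℕ) : Prop :=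
  ∃ d : Finset X → Bool, ∀ Y : Set X, Y.Infinite →
    ¬ ∃ i : Bool, ∀ s : Finset X, s.card = n → ↑s ⊆ Y → d s = i

/-- Every `H_2`-finite (i.e. `H^B_2`-finite) set is `R^2`-finite. -/
theorem stmt17 {X : Type*} [DecidableEq X] (h : HBnFinite X 2) : RFinite X 2 := by
  obtain ⟨c, hc⟩ := h
  refine ⟨c, fun Z hZ ⟨i, hi⟩ => ?_⟩
  obtain ⟨a, ha⟩ := hZ.nonempty
  have hpair : ∀ x ∈ Z, ∀ y ∈ Z, x ≠ y → c {x, y} = i := fun x hx y hy hxy =>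
    hi _ (Finset.card_pair hxy) (by simp [Set.insert_subset_iff, hx, hy])
  refine hc ((fun x => ({a, x} : Finset X)) '' (Z \ {a})) ?_ ⟨i, ?_⟩
  · refine (hZ.sdiff (Set.finite_singleton a)).image ?_
    intro x hx y hy hxy
    have hxa : x ≠ a := hx.2
    have hmem : x ∈ ({a, y} : Finset X) := by
      rw [← show ({a, x} : Finset X) = {a, y} from hxy]
      simp
    simpa [hxa] using hmem
  · rintro z ⟨F, hF, hpos, hle, rfl⟩
    obtain hF1 | hF2 : F.card = 1 ∨ F.card = 2 := by omega
    · obtain ⟨s, rfl⟩ := Finset.card_eq_one.mp hF1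
      obtain ⟨x, ⟨hx, hxa⟩, rfl⟩ := hF (by simp : s ∈ _)
      have hfold : FSfold {({a, x} : Finset X)} = {a, x} := by simp [FSfold]
      rw [hfold]
      exact hpair a ha x hx (Ne.symm hxa)
    · obtain ⟨s, t, hst, rfl⟩ := Finset.card_eq_two.mp hF2
      obtain ⟨x, ⟨hx, hxa⟩, rfl⟩ := hF (by simp : s ∈ _)
      obtain ⟨y, ⟨hy, hya⟩, rfl⟩ := hF (by simp : t ∈ _)
      have hxa' : x ≠ a := hxa
      have hya' : y ≠ a := hya
      have hxy : x ≠ y := by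
        rintro rfl
        exact hst rfl
      have hfold : FSfold {({a, x} : Finset X), {a, y}} = {x, y} := by
        rw [FSfold, Finset.fold_insert (by simpa using hst), Finset.fold_singleton]
        ext w
        simp only [id, Finset.mem_symmDiff, Finset.mem_insert, Finset.mem_singleton,
          Finset.notMem_empty]
        grind
      rw [hfold]
      exact hpair x hx y hy hxy
end
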